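/- Let X be a random vector in ℝ^d whose law is absolutely continuous with respect to Lebesgue measure, and let (D, B) and (D', B') be random elements of ℝ^d × ℝ such that the pair ((D, B), (D', B')) is independent of X. Then P( (D, B) ≠ (D', B') and ⟨D, X⟩ + B = ⟨D', X⟩ + B' ) = 0. -/

import Mathlib

open MeasureTheory ProbabilityTheory Matrix

/-!
Conditionally on the two parameters `p = (D, B)` and `q = (D', B')` with `p ≠ q`, the affine
functions agree only on `{x | (D - D') ⬝ᵥ x = B' - B}`. This set is a hyperplane when `D ≠ D'`,
hence Lebesgue-null (`volume_dotProduct_eq_zero`), and it is empty when `D = D'` and `B ≠ B'`.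
By independence the joint law of `((p, q), X)` is a product measure, so Fubini
(`Measure.measure_prod_null`) together with absolute continuity of the law of `X` concludes.
-/

lemma volume_dotProduct_eq_zero {d : ℕ} {v : Fin d → ℝ} (hv : v ≠ 0) (c : ℝ) :
    volume {x : Fin d → ℝ | v ⬝ᵥ x = c} = 0 := by
  let A : AffineSubspace ℝ (Fin d → ℝ) :=
    { carrier := {x | v ⬝ᵥ x = c}
      smul_vsub_vadd_mem' := by
        intro t x y z hx hy hz
        simp only [Set.mem_ofPred_eq] at hx hy hz
        simp [dotProduct_add, dotProduct_sub, dotProduct_smul, hx, hy, hz] }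
  refine Measure.addHaar_affineSubspace volume A fun h => hv ?_
  have hmem : ∀ x : Fin d → ℝ, v ⬝ᵥ x = c := fun x => by
    have hx : x ∈ A := h ▸ AffineSubspace.mem_top ℝ _ x
    exact hx
  -- A linear functional that is constant vanishes; evaluate it at `v` itself.
  have h0 : c = 0 := by simpa using (hmem 0).symm
  exact dotProduct_self_eq_zero.mp ((hmem v).trans h0)

lemma volume_affine_agree_eq_zero {d : ℕ} {p q : (Fin d → ℝ) × ℝ} (hpq : p ≠ q) :
    volume {x : Fin d → ℝ | p.1 ⬝ᵥ x + p.2 = q.1 ⬝ᵥ x + q.2} = 0 := by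
  by_cases h : p.1 = q.1
  · have hne : p.2 ≠ q.2 := fun h2 => hpq (Prod.ext h h2)
    simp [h, hne]
  · refine measure_mono_null (fun x hx => ?_)
      (volume_dotProduct_eq_zero (sub_ne_zero.mpr h) (q.2 - p.2))
    simp only [Set.mem_ofPred_eq, sub_dotProduct] at hx ⊢
    linarith

/-- Independence (Fubini) lemma from the proof of Theorem 2 of the paper: if `X` is a random
vector in `ℝ^d` with law absolutely continuous with respect to Lebesgue measure, and the pair
of random affine parameters `((D, B), (D', B'))` is independent of `X`, then with probability
`0` the two parameters differ yet the corresponding affine functions agree at `X`. -/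
theorem stmt8 (d : ℕ) {Ω : Type*} [MeasurableSpace Ω]
    (μ : Measure Ω) [IsProbabilityMeasure μ]
    (X : Ω → (Fin d → ℝ)) (hX : Measurable X)
    (hac : Measure.map X μ ≪ volume)
    (D D' : Ω → (Fin d → ℝ)) (B B' : Ω → ℝ)
    (hD : Measurable D) (hD' : Measurable D')
    (hB : Measurable B) (hB' : Measurable B')
    (hindep : IndepFun (fun ω => ((D ω, B ω), (D' ω, B' ω))) X μ) :
    μ {ω | (D ω, B ω) ≠ (D' ω, B' ω) ∧
        D ω ⬝ᵥ X ω + B ω = D' ω ⬝ᵥ X ω + B' ω} = 0 := by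
  let S : Set ((((Fin d → ℝ) × ℝ) × ((Fin d → ℝ) × ℝ)) × (Fin d → ℝ)) :=
    {z | z.1.1 ≠ z.1.2 ∧ z.1.1.1 ⬝ᵥ z.2 + z.1.1.2 = z.1.2.1 ⬝ᵥ z.2 + z.1.2.2}
  have hS : MeasurableSet S := by
    refine MeasurableSet.inter ?_ ?_
    · exact (measurableSet_eq_fun (measurable_fst.comp measurable_fst)
        (measurable_snd.comp measurable_fst)).compl
    · refine measurableSet_eq_fun ?_ ?_ <;>
      · unfold dotProduct
        fun_prop
  have hP : Measurable fun ω => ((D ω, B ω), (D' ω, B' ω)) := by fun_prop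
  have hlaw := (indepFun_iff_map_prod_eq_prod_map_map hP.aemeasurable hX.aemeasurable).mp hindep
  have hnull : μ.map (fun ω => (((D ω, B ω), (D' ω, B' ω)), X ω)) S = 0 := by
    rw [hlaw, Measure.measure_prod_null hS]
    refine Filter.Eventually.of_forall fun pq => hac ?_
    by_cases hpq : pq.1 = pq.2
    · simp [S, hpq]
    · exact measure_mono_null (fun x hx => hx.2) (volume_affine_agree_eq_zero hpq)
  rwa [Measure.map_apply (hP.prodMk hX) hS] at hnull
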